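/- Let κ and λ be cardinals with 𝔠 ≤ κ ≤ λ ≤ 2^κ, where 𝔠 = 2^{ℵ₀}. Then there exist 2^λ mutually non-homeomorphic pathwise connected, locally pathwise connected, almost metrizable topological spaces of cardinality κ and weight λ. -/

import Mathlib

open Cardinal Set Topology

/-- The weight of a topological space: the least cardinality of a basis for its topology. -/
noncomputable def tweight (X : Type) [TopologicalSpace X] : Cardinal :=
  sInf { c : Cardinal | ∃ B : Set (Set X), TopologicalSpace.IsTopologicalBasis B ∧ #B = c }

/-- A space is scattered if every nonempty subset has a point isolated in that subset. -/
def Scattered (X : Type) [TopologicalSpace X] : Prop :=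
  ∀ S : Set X, S.Nonempty → ∃ x ∈ S, ∃ U : Set X, IsOpen U ∧ U ∩ S = {x}

/-- Strong zero-dimensionality: every closed set contained in an open set can be
separated from its complement by an open-closed set. -/
def StronglyZeroDimensional (X : Type) [TopologicalSpace X] : Prop :=
  ∀ A U : Set X, IsClosed A → IsOpen U → A ⊆ U →
    ∃ V : Set X, IsOpen V ∧ IsClosed V ∧ A ⊆ V ∧ V ⊆ U

/-- A space is hereditarily paracompact if every subspace is paracompact. -/
def HereditarilyParacompact (X : Type) [TopologicalSpace X] : Prop :=
  ∀ S : Set X, ParacompactSpace S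

/-- A space is perfectly normal iff it is normal and every closed set is a Gδ-set. -/
def PerfectlyNormal (X : Type) [TopologicalSpace X] : Prop :=
  NormalSpace X ∧ ∀ C : Set X, IsClosed C → IsGδ C

/-- A Hausdorff space is almost discrete iff the complement of some point is discrete. -/
def AlmostDiscrete (X : Type) [TopologicalSpace X] : Prop :=
  T2Space X ∧ ∃ x : X, DiscreteTopology ({x}ᶜ : Set X)

/-- A space is almost metrizable iff it is perfectly normal and the complement of some
point is metrizable. -/
def AlmostMetrizable (X : Type) [TopologicalSpace X] : Prop :=
  PerfectlyNormal X ∧ ∃ x : X, TopologicalSpace.MetrizableSpace ({x}ᶜ : Set X)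

/-- There is a family of `n` pairwise non-homeomorphic spaces, all with property `P`. -/
def ExistsNonHomeoFamily (n : Cardinal) (P : (X : Type) → TopologicalSpace X → Prop) : Prop :=
  ∃ (ι : Type) (F : ι → Type) (t : (i : ι) → TopologicalSpace (F i)),
    #ι = n ∧ (∀ i, P (F i) (t i)) ∧
      ∀ i j, i ≠ j → IsEmpty (@Homeomorph (F i) (F j) (t i) (t j))

/-- Every family of pairwise non-homeomorphic spaces with property `P` has at most `n`
members. -/
def NonHomeoUpperBound (n : Cardinal) (P : (X : Type) → TopologicalSpace X → Prop) : Prop :=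
  ∀ (ι : Type) (F : ι → Type) (t : (i : ι) → TopologicalSpace (F i)),
    (∀ i, P (F i) (t i)) →
    (∀ i j, i ≠ j → IsEmpty (@Homeomorph (F i) (F j) (t i) (t j))) → #ι ≤ n

/-- There are precisely `n` spaces with property `P`, up to homeomorphism. -/
def PreciselyNonHomeo (n : Cardinal) (P : (X : Type) → TopologicalSpace X → Prop) : Prop :=
  ExistsNonHomeoFamily n P ∧ NonHomeoUpperBound n P

/-!
Let `Y` be a metrizable space with `κ` components, each of them path connected, locally path
connected and unbounded in the direction of a height function, no two of them homeomorphic. Adding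
a point `∞`, and taking as its neighbourhoods the points of large height together with the
components whose index is large for a filter `𝒢`, gives a path connected space. If `𝒢` has
uncountable character, then `∞` is the only point of uncountable character, so a homeomorphism
between two such spaces restricts to `Y`, where it preserves every component; hence it preserves
`𝒢`. As `2 ^ λ` has a dense subset of size `κ`, the traces on it of the neighbourhood filters of
the points of `2 ^ λ` are `2 ^ λ` distinct filters of character `λ`.

The components come from scattered spaces of different Cantor–Bendixson ranks, the trees of
sequences descending below an ordinal, embedded in a normed space `E`. Gluing the two open half
spaces of `E × ℝ` along such a tree makes it recoverable as the closure of the set of local cut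
points, because its isolated points are dense and cut locally, while no point off the tree does.
-/

section InducedHomeomorph

variable {X X' Z Z' : Type*} [TopologicalSpace X] [TopologicalSpace X'] [TopologicalSpace Z]
  [TopologicalSpace Z']

/-- The homeomorphism between two embedded spaces induced by a homeomorphism of the ambient
spaces that carries one image onto the other. -/
noncomputable def homeomorphOfImageRange {f : X → Z} {g : X' → Z'} (hf : IsEmbedding f)
    (hg : IsEmbedding g) (e : Z ≃ₜ Z') (h : e '' range f = range g) : X ≃ₜ X' :=
  hf.toHomeomorph.trans ((e.image (range f)).trans
    ((Homeomorph.setCongr h).trans hg.toHomeomorph.symm))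

lemma apply_homeomorphOfImageRange {f : X → Z} {g : X' → Z'} (hf : IsEmbedding f)
    (hg : IsEmbedding g) (e : Z ≃ₜ Z') (h : e '' range f = range g) (x : X) :
    g (homeomorphOfImageRange hf hg e h x) = e (f x) :=
  congrArg Subtype.val (hg.toHomeomorph.apply_symm_apply ⟨e (f x), h ▸ ⟨f x, ⟨x, rfl⟩, rfl⟩⟩)

end InducedHomeomorph

section Weight

variable {X : Type} [TopologicalSpace X]

lemma tweight_le_mk {B : Set (Set X)} (hB : TopologicalSpace.IsTopologicalBasis B) :
    tweight X ≤ #B :=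
  csInf_le' ⟨B, hB, rfl⟩

lemma exists_isTopologicalBasis_mk_eq_tweight (X : Type) [TopologicalSpace X] :
    ∃ B : Set (Set X), TopologicalSpace.IsTopologicalBasis B ∧ #B = tweight X :=
  csInf_mem (s := {c : Cardinal | ∃ B : Set (Set X),
    TopologicalSpace.IsTopologicalBasis B ∧ #B = c})
    ⟨_, _, TopologicalSpace.isTopologicalBasis_opens, rfl⟩

lemma tweight_le_mk_mul_aleph0 [FirstCountableTopology X] : tweight X ≤ #X * ℵ₀ := by
  choose s hs using fun x : X ↦ (𝓝 x).exists_antitone_basis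
  have hB : TopologicalSpace.IsTopologicalBasis
      (range fun p : X × ℕ ↦ interior (s p.1 p.2)) := by
    refine TopologicalSpace.isTopologicalBasis_of_isOpen_of_nhds ?_ fun x U hxU hU ↦ ?_
    · rintro _ ⟨p, rfl⟩
      exact isOpen_interior
    · obtain ⟨n, hn⟩ := (hs x).mem_iff.1 (hU.mem_nhds hxU)
      exact ⟨_, ⟨(x, n), rfl⟩, mem_interior_iff_mem_nhds.2 ((hs x).mem n),
        interior_subset.trans hn⟩
  calc tweight X ≤ #(range fun p : X × ℕ ↦ interior (s p.1 p.2)) := tweight_le_mk hB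
    _ ≤ #(X × ℕ) := mk_range_le
    _ = #X * ℵ₀ := by simp

end Weight

section Cube

variable {O Λ : Type*}

lemma hasBasis_nhds_pi_of_discreteTopology {A : Type*} [TopologicalSpace A] [DiscreteTopology A]
    (T : Λ → A) :
    (𝓝 T).HasBasis (fun _ : Finset Λ ↦ True) fun Φ ↦ (Φ : Set Λ).pi fun i ↦ {T i} := by
  refine Filter.hasBasis_iff.2 fun s ↦ ⟨fun hs ↦ ?_, fun ⟨Φ, _, hΦ⟩ ↦ ?_⟩
  · rw [nhds_pi, Filter.mem_pi'] at hs
    obtain ⟨Φ, t, ht, hts⟩ := hs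
    exact ⟨Φ, trivial, subset_trans (pi_mono fun i _ ↦
      singleton_subset_iff.2 (mem_of_mem_nhds (ht i))) hts⟩
  · exact Filter.mem_of_superset (set_pi_mem_nhds Φ.finite_toSet fun i _ ↦
      (isOpen_discrete {T i}).mem_nhds rfl) hΦ

lemma exists_finset_injOn_filter_mem {f : Λ → Set O}
    [∀ i, DecidablePred (· ∈ f i)] (hf : f.Injective) (Φ : Finset Λ) :
    ∃ a : Finset O, InjOn (fun i ↦ a.filter (· ∈ f i)) Φ := by
  classical
  have hsep (p : Λ × Λ) : ∃ a : Finset O, p.1 ≠ p.2 → ∃ x ∈ a, ¬ (x ∈ f p.1 ↔ x ∈ f p.2) := by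
    by_cases hp : p.1 = p.2
    · exact ⟨∅, fun h ↦ (h hp).elim⟩
    · obtain ⟨x, hx⟩ := not_forall.1 (mt Set.ext (hf.ne hp))
      exact ⟨{x}, fun _ ↦ ⟨x, by simp, hx⟩⟩
  choose a ha using hsep
  refine ⟨(Φ ×ˢ Φ).biUnion a, fun i hi j hj hij ↦ by_contra fun hne ↦ ?_⟩
  obtain ⟨x, hxa, hx⟩ := ha (i, j) hne
  have hmem : x ∈ (Φ ×ˢ Φ).biUnion a :=
    Finset.mem_biUnion.2 ⟨(i, j), Finset.mk_mem_product hi hj, hxa⟩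
  simpa only [Finset.mem_filter, hmem, true_and, hx] using Finset.ext_iff.1 hij x

-- The Hewitt–Marczewski–Pondiczery theorem for powers of the two-point space.
lemma exists_denseRange_pi_bool {O Λ : Type} [Infinite O] (hΛ : #Λ ≤ 2 ^ #O) :
    ∃ d : O → Λ → Bool, DenseRange d := by
  classical
  obtain ⟨f⟩ : #Λ ≤ #(Set O) := by rwa [mk_set]
  obtain ⟨e⟩ : Nonempty (O ≃ Finset O × Finset (Finset O)) := by
    rw [← Cardinal.eq]
    simp [mk_finset_of_infinite, mul_eq_self (aleph0_le_mk O)]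
  refine ⟨fun o i ↦ decide ((e o).1.filter (· ∈ f i) ∈ (e o).2), fun T ↦ ?_⟩
  refine mem_closure_iff_nhds_basis (hasBasis_nhds_pi_of_discreteTopology T) |>.2 fun Φ _ ↦ ?_
  obtain ⟨a, ha⟩ := exists_finset_injOn_filter_mem f.injective Φ
  let 𝒜 := (Φ.filter (T · = true)).image fun i ↦ a.filter (· ∈ f i)
  refine ⟨_, ⟨e.symm (a, 𝒜), rfl⟩, fun i hi ↦ ?_⟩
  have hmem : a.filter (· ∈ f i) ∈ 𝒜 ↔ T i = true := by
    simp only [𝒜, Finset.mem_image, Finset.mem_filter]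
    exact ⟨fun ⟨j, hj, hji⟩ ↦ ha hj.1 hi hji ▸ hj.2, fun h ↦ ⟨i, ⟨hi, h⟩, rfl⟩⟩
  simp [hmem]

lemma mk_le_of_hasBasis_comap_nhds {O Λ κ : Type} {d : O → Λ → Bool} (hd : DenseRange d)
    {T : Λ → Bool} {p : κ → Prop} {s : κ → Set O}
    (h : (Filter.comap d (𝓝 T)).HasBasis p s) : #Λ ≤ #{k // p k} * ℵ₀ := by
  classical
  have hbox := hasBasis_nhds_pi_of_discreteTopology (A := Bool) (Λ := Λ)
  choose Φ _ hΦ using fun k : {k // p k} ↦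
    ((hbox T).comap d).mem_iff.1 (h.mem_of_mem k.2)
  have hcover (i : Λ) : ∃ k, i ∈ Φ k := by
    have hi : {x : Λ → Bool | x i = T i} ∈ 𝓝 T :=
      (hbox T).mem_iff.2 ⟨{i}, trivial, fun x hx ↦ hx i (by simp)⟩
    obtain ⟨k, hk, hks⟩ := h.mem_iff.1 (Filter.preimage_mem_comap hi)
    refine ⟨⟨k, hk⟩, by_contra fun hik ↦ ?_⟩
    let T' := Function.update T i (!T i)
    obtain ⟨_, hx, o, rfl⟩ := mem_closure_iff_nhds.1 (hd T') _
      ((hbox T').mem_of_mem (i := insert i (Φ ⟨k, hk⟩)) trivial)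
    have hne : d o i = !T i := by simpa [T'] using hx i (by simp)
    refine Bool.not_ne_self (T i) (hne ▸ hks (hΦ ⟨k, hk⟩ fun j hj ↦ ?_))
    have hji : j ≠ i := fun hji ↦ hik (hji ▸ hj)
    simpa [T', hji] using hx j (by simp [hj])
  calc #Λ = #(⋃ k, (Φ k : Set Λ)) := by
        rw [← mk_univ]
        exact congrArg (fun s : Set Λ ↦ #s) (by ext i; simpa using hcover i)
    _ ≤ #{k // p k} * ⨆ k, #(Φ k : Set Λ) := mk_iUnion_le _
    _ ≤ #{k // p k} * ℵ₀ := by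
        gcongr
        exact ciSup_le' fun k ↦ (lt_aleph0_of_finite _).le

end Cube

/-- The one-point extension of a space `Y` by a point `infty` whose deleted neighbourhoods are
generated by the open members of the filter `F`; see `PointExtension.hasBasis_nhds_infty`. -/
def PointExtension {Y : Type*} (_ : Filter Y) : Type _ := Option Y

namespace PointExtension

variable {Y Y' ι : Type*} {F : Filter Y} {F' : Filter Y'} {p : ι → Prop} {s : ι → Set Y}

/-- The added point of `PointExtension F`. -/
def infty : PointExtension F := (none : Option Y)

/-- The inclusion of the original space in `PointExtension F`. -/
def coe (y : Y) : PointExtension F := (some y : Option Y)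

lemma coe_injective : (coe : Y → PointExtension F).Injective := Option.some_injective Y

lemma coe_ne_infty (y : Y) : (coe y : PointExtension F) ≠ infty := Option.some_ne_none y

lemma eq_infty_or_eq_coe (x : PointExtension F) : x = infty ∨ ∃ y, x = coe y := by
  cases x with
  | none => exact .inl rfl
  | some y => exact .inr ⟨y, rfl⟩

lemma range_coe : range (coe : Y → PointExtension F) = {infty}ᶜ :=
  Set.ext fun x ↦ ⟨fun ⟨y, hy⟩ ↦ hy ▸ coe_ne_infty y,
    fun hx ↦ (eq_infty_or_eq_coe x).elim (fun h ↦ (hx h).elim) fun ⟨y, hy⟩ ↦ ⟨y, hy.symm⟩⟩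

lemma preimage_coe_insert_infty (V : Set Y) :
    coe ⁻¹' insert (infty : PointExtension F) (coe '' V) = V := by
  ext y
  simp [coe_ne_infty, coe_injective.eq_iff]

lemma mk_eq {Y : Type} (F : Filter Y) : #(PointExtension F) = #Y + 1 := mk_option

variable [TopologicalSpace Y] [TopologicalSpace Y']

instance : TopologicalSpace (PointExtension F) where
  IsOpen W := IsOpen (coe ⁻¹' W : Set Y) ∧ (infty ∈ W → coe ⁻¹' W ∈ F)
  isOpen_univ := ⟨isOpen_univ, fun _ ↦ Filter.univ_mem⟩
  isOpen_inter _ _ h₁ h₂ := ⟨h₁.1.inter h₂.1, fun h ↦ Filter.inter_mem (h₁.2 h.1) (h₂.2 h.2)⟩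
  isOpen_sUnion S hS := by
    refine ⟨?_, fun ⟨W, hW, hmem⟩ ↦ ?_⟩
    · rw [preimage_sUnion]
      exact isOpen_biUnion fun W hW ↦ (hS W hW).1
    · exact Filter.mem_of_superset ((hS W hW).2 hmem) (preimage_mono (subset_sUnion_of_mem hW))

lemma isOpen_iff {W : Set (PointExtension F)} :
    IsOpen W ↔ IsOpen (coe ⁻¹' W : Set Y) ∧ (infty ∈ W → coe ⁻¹' W ∈ F) := Iff.rfl

lemma isOpen_insert_infty {V : Set Y} (hV : IsOpen V) (hVF : V ∈ F) :
    IsOpen (insert (infty : PointExtension F) (coe '' V)) := by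
  rw [isOpen_iff, preimage_coe_insert_infty]
  exact ⟨hV, fun _ ↦ hVF⟩

lemma isOpenEmbedding_coe : IsOpenEmbedding (coe : Y → PointExtension F) := by
  refine .of_continuous_injective_isOpenMap ⟨fun W hW ↦ hW.1⟩ coe_injective fun V hV ↦ ?_
  rw [isOpen_iff, preimage_image_eq V coe_injective]
  exact ⟨hV, fun ⟨y, _, hy⟩ ↦ (coe_ne_infty y hy).elim⟩

lemma tendsto_coe_nhds_infty : Filter.Tendsto coe F (𝓝 (infty : PointExtension F)) := by
  intro W hW
  obtain ⟨W', hWW', hW', hmem⟩ := mem_nhds_iff.1 hW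
  exact Filter.mem_of_superset (hW'.2 hmem) (preimage_mono hWW')

lemma hasBasis_nhds_infty (hF : F.HasBasis p s) (hs : ∀ i, p i → IsOpen (s i)) :
    (𝓝 (infty : PointExtension F)).HasBasis p fun i ↦ insert infty (coe '' s i) := by
  refine Filter.hasBasis_iff.2 fun W ↦ ⟨fun hW ↦ ?_, fun ⟨i, hi, hW⟩ ↦ ?_⟩
  · obtain ⟨i, hi, hiW⟩ := hF.mem_iff.1 (tendsto_coe_nhds_infty hW)
    exact ⟨i, hi, insert_subset (mem_of_mem_nhds hW) (image_subset_iff.2 hiW)⟩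
  · exact Filter.mem_of_superset ((isOpen_insert_infty (hs i hi) (hF.mem_of_mem hi)).mem_nhds
      (mem_insert _ _)) hW

lemma comap_coe_nhds_infty (hF : F.HasBasis p s) (hs : ∀ i, p i → IsOpen (s i)) :
    Filter.comap coe (𝓝 (infty : PointExtension F)) = F := by
  refine ((hasBasis_nhds_infty hF hs).comap coe).eq_of_same_basis ?_
  simpa only [preimage_coe_insert_infty] using hF

lemma separatedNhds_of_infty_notMem [NormalSpace Y] {q : ι → Prop} {t : ι → Set Y}
    (hF : F.HasBasis q t) (ht : ∀ i, q i → IsClosed (t i)) {C D : Set (PointExtension F)}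
    (hC : IsClosed C) (hD : IsClosed D) (hCD : Disjoint C D) (hC' : infty ∉ C) :
    SeparatedNhds C D := by
  obtain ⟨i, hi, hiC⟩ := hF.mem_iff.1 (hC.isOpen_compl.2 hC')
  have hdisj : Disjoint (coe ⁻¹' C) (coe ⁻¹' D ∪ t i) :=
    (hCD.preimage coe).union_right (subset_compl_iff_disjoint_left.1 hiC)
  have hcont := (isOpenEmbedding_coe (F := F)).continuous
  obtain ⟨U, V, hU, hV, hCU, hDV, hUV⟩ := normal_separation
    (hC.preimage hcont) ((hD.preimage hcont).union (ht i hi)) hdisj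
  have hVF : V ∈ F :=
    Filter.mem_of_superset (hF.mem_of_mem hi) (subset_union_right.trans hDV)
  refine ⟨coe '' U, insert infty (coe '' V), isOpenEmbedding_coe.isOpenMap U hU,
    isOpen_insert_infty hV hVF, fun x hx ↦ ?_, fun x hx ↦ ?_, ?_⟩
  · obtain rfl | ⟨y, rfl⟩ := eq_infty_or_eq_coe x
    · exact (hC' hx).elim
    · exact mem_image_of_mem _ (hCU hx)
  · obtain rfl | ⟨y, rfl⟩ := eq_infty_or_eq_coe x
    · exact mem_insert _ _
    · exact mem_insert_of_mem _ (mem_image_of_mem _ (hDV (.inl hx)))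
  · rw [disjoint_insert_right]
    exact ⟨fun ⟨y, _, hy⟩ ↦ coe_ne_infty y hy, (disjoint_image_iff coe_injective).2 hUV⟩

lemma normalSpace [NormalSpace Y] {q : ι → Prop} {t : ι → Set Y}
    (hF : F.HasBasis q t) (ht : ∀ i, q i → IsClosed (t i)) : NormalSpace (PointExtension F) := by
  refine ⟨fun C D hC hD hCD ↦ ?_⟩
  by_cases hC' : infty ∈ C
  · exact (separatedNhds_of_infty_notMem hF ht hD hC hCD.symm (hCD.notMem_of_mem_left hC')).symm
  · exact separatedNhds_of_infty_notMem hF ht hC hD hCD hC'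

lemma isGδ_image_coe {C : Set Y} (hC : IsGδ C) : IsGδ (coe '' C : Set (PointExtension F)) := by
  obtain ⟨U, hU, rfl⟩ := hC.eq_iInter_nat
  rw [coe_injective.injOn.image_iInter_eq]
  exact .iInter_of_isOpen fun n ↦ isOpenEmbedding_coe.isOpenMap _ (hU n)

lemma isGδ_singleton_infty (hF : F.HasBasis p s) (hs : ∀ i, p i → IsOpen (s i)) {f : Y → ℝ}
    (hf : Filter.Tendsto f F Filter.atTop) : IsGδ {(infty : PointExtension F)} := by
  choose i hi hif using fun n : ℕ ↦ hF.mem_iff.1 (hf (Filter.Ioi_mem_atTop (n : ℝ)))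
  have heq : {(infty : PointExtension F)} = ⋂ n, insert infty (coe '' s (i n)) := by
    refine (singleton_subset_iff.2 (mem_iInter.2 fun n ↦ mem_insert _ _)).antisymm fun x hx ↦ ?_
    obtain rfl | ⟨y, rfl⟩ := eq_infty_or_eq_coe x
    · rfl
    · obtain ⟨n, hn⟩ := exists_nat_gt (f y)
      have hy := (preimage_coe_insert_infty (F := F) (s (i n))).subset (mem_iInter.1 hx n)
      exact (lt_asymm hn (hif n hy)).elim
  rw [heq]
  exact .iInter_of_isOpen fun n ↦ isOpen_insert_infty (hs _ (hi n)) (hF.mem_of_mem (hi n))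

lemma isGδ_of_isClosed (hY : ∀ C : Set Y, IsClosed C → IsGδ C)
    (hinfty : IsGδ {(infty : PointExtension F)}) {C : Set (PointExtension F)} (hC : IsClosed C) :
    IsGδ C := by
  have hcoe : IsGδ (coe '' (coe ⁻¹' C : Set Y) : Set (PointExtension F)) :=
    isGδ_image_coe (hY _ (hC.preimage isOpenEmbedding_coe.continuous))
  rw [image_preimage_eq_inter_range, range_coe, ← sdiff_eq] at hcoe
  by_cases hC' : infty ∈ C
  · simpa [insert_sdiff_singleton, insert_eq_of_mem hC'] using hinfty.union hcoe
  · rwa [sdiff_singleton_eq_self hC'] at hcoe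

lemma metrizableSpace_compl_infty [TopologicalSpace.MetrizableSpace Y] :
    TopologicalSpace.MetrizableSpace ({infty}ᶜ : Set (PointExtension F)) := by
  rw [← range_coe]
  exact (isOpenEmbedding_coe (F := F)).toIsEmbedding.toHomeomorph.symm.isEmbedding.metrizableSpace

lemma almostMetrizable {Y : Type} [TopologicalSpace Y] [TopologicalSpace.MetrizableSpace Y]
    {F : Filter Y} {ι ι' : Type*} {p : ι → Prop} {s : ι → Set Y} {q : ι' → Prop} {t : ι' → Set Y}
    (hF : F.HasBasis p s) (hs : ∀ i, p i → IsOpen (s i)) (hF' : F.HasBasis q t)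
    (ht : ∀ i, q i → IsClosed (t i)) {f : Y → ℝ} (hf : Filter.Tendsto f F Filter.atTop) :
    AlmostMetrizable (PointExtension F) := by
  let := TopologicalSpace.metrizableSpaceMetric Y
  exact ⟨⟨normalSpace hF' ht, fun C ↦ isGδ_of_isClosed (fun _ hC ↦ hC.isGδ)
    (isGδ_singleton_infty hF hs hf)⟩, infty, metrizableSpace_compl_infty⟩

lemma tweight_le_add {Y ι : Type} [TopologicalSpace Y] {F : Filter Y} {p : ι → Prop}
    {s : ι → Set Y} (hF : F.HasBasis p s) (hs : ∀ i, p i → IsOpen (s i)) :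
    tweight (PointExtension F) ≤ tweight Y + #{i // p i} := by
  obtain ⟨B, hB, hBY⟩ := exists_isTopologicalBasis_mk_eq_tweight Y
  let N := range fun i : {i // p i} ↦ insert (infty : PointExtension F) (coe '' s i)
  have hbasis : TopologicalSpace.IsTopologicalBasis (image coe '' B ∪ N) := by
    refine TopologicalSpace.isTopologicalBasis_of_isOpen_of_nhds ?_ fun x W hxW hW ↦ ?_
    · rintro _ (⟨V, hV, rfl⟩ | ⟨i, rfl⟩)
      · exact isOpenEmbedding_coe.isOpenMap V (hB.isOpen hV)
      · exact isOpen_insert_infty (hs i i.2) (hF.mem_of_mem i.2)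
    · obtain rfl | ⟨y, rfl⟩ := eq_infty_or_eq_coe x
      · obtain ⟨i, hi, hiW⟩ := (hasBasis_nhds_infty hF hs).mem_iff.1 (hW.mem_nhds hxW)
        exact ⟨_, .inr ⟨⟨i, hi⟩, rfl⟩, mem_insert _ _, hiW⟩
      · obtain ⟨V, hV, hyV, hVW⟩ := hB.exists_subset_of_mem_open hxW hW.1
        exact ⟨_, .inl ⟨V, hV, rfl⟩, mem_image_of_mem _ hyV, image_subset_iff.2 hVW⟩
  calc tweight (PointExtension F) ≤ #(image coe '' B ∪ N : Set (Set (PointExtension F))) :=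
        tweight_le_mk hbasis
    _ ≤ #(image coe '' B : Set (Set (PointExtension F))) + #N := mk_union_le _ _
    _ ≤ tweight Y + #{i // p i} := add_le_add (mk_image_le.trans hBY.le) mk_range_le

lemma joinedIn_infty {γ : NNReal → Y} (hγ : Continuous γ)
    (hγF : Filter.Tendsto γ Filter.atTop F) {V : Set Y} (hV : ∀ r, γ r ∈ V) :
    JoinedIn (insert (infty : PointExtension F) (coe '' V)) (coe (γ 0)) infty := by
  let f : ℝ → PointExtension F := fun t ↦ coe (γ (t / (1 - t)).toNNReal)
  have hcont : ContinuousOn f (unitInterval \ {1}) := by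
    refine isOpenEmbedding_coe.continuous.comp_continuousOn (hγ.comp_continuousOn ?_)
    refine continuous_real_toNNReal.comp_continuousOn (continuousOn_id.div (by fun_prop) ?_)
    exact fun t ht ↦ sub_ne_zero.2 (Ne.symm ht.2)
  have hlim : Filter.Tendsto f (𝓝[unitInterval \ {1}] 1) (𝓝 infty) := by
    refine tendsto_coe_nhds_infty.comp (hγF.comp (tendsto_real_toNNReal_atTop.comp ?_))
    have h : Filter.Tendsto (fun t : ℝ ↦ 1 - t) (𝓝[unitInterval \ {1}] 1) (𝓝[>] 0) := by
      refine tendsto_nhdsWithin_iff.2 ⟨?_, eventually_mem_nhdsWithin.mono fun t ht ↦ ?_⟩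
      · exact (Continuous.tendsto' (by fun_prop) _ _ (by simp)).mono_left nhdsWithin_le_nhds
      · exact sub_pos.2 (ht.1.2.lt_of_ne ht.2)
    simpa only [div_eq_mul_inv, id, Pi.inv_apply] using Filter.Tendsto.pos_mul_atTop one_pos
      (Filter.tendsto_id.mono_left nhdsWithin_le_nhds) h.inv_tendsto_nhdsGT_zero
  refine JoinedIn.ofLine (f := Function.update f 1 infty)
    (continuousOn_update_iff.2 ⟨hcont, fun _ ↦ hlim⟩) (by simp [f]) (by simp) ?_
  rintro _ ⟨t, -, rfl⟩
  obtain rfl | ht := eq_or_ne t 1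
  · simp
  · simpa [ht, f] using .inr ⟨_, hV _, rfl⟩

lemma isPathConnected_insert_infty {V : Set Y} (hV : ∀ y ∈ V, ∃ γ : NNReal → Y,
    Continuous γ ∧ γ 0 = y ∧ Filter.Tendsto γ Filter.atTop F ∧ ∀ r, γ r ∈ V) :
    IsPathConnected (insert (infty : PointExtension F) (coe '' V)) := by
  refine ⟨infty, mem_insert _ _, ?_⟩
  rintro _ (rfl | ⟨y, hy, rfl⟩)
  · exact JoinedIn.refl (mem_insert _ _)
  · obtain ⟨γ, hγ, rfl, hγF, hγV⟩ := hV y hy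
    exact (joinedIn_infty hγ hγF hγV).symm

lemma locallyPathConnectedSpace [LocallyPathConnectedSpace Y] (hF : F.HasBasis p s)
    (hs : ∀ i, p i → IsOpen (s i))
    (hpath : ∀ i, p i → IsPathConnected (insert (infty : PointExtension F) (coe '' s i))) :
    LocallyPathConnectedSpace (PointExtension F) := by
  refine ⟨fun x ↦ Filter.hasBasis_self.2 fun W hW ↦ ?_⟩
  obtain rfl | ⟨y, rfl⟩ := eq_infty_or_eq_coe x
  · obtain ⟨i, hi, hiW⟩ := (hasBasis_nhds_infty hF hs).mem_iff.1 hW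
    exact ⟨_, (hasBasis_nhds_infty hF hs).mem_of_mem hi, hpath i hi, hiW⟩
  · obtain ⟨V, ⟨hV, hVc⟩, hVW⟩ := (path_connected_basis y).mem_iff.1
      (isOpenEmbedding_coe.continuous.continuousAt hW)
    exact ⟨coe '' V, isOpenEmbedding_coe.image_mem_nhds.2 hV,
      hVc.image isOpenEmbedding_coe.continuous, image_subset_iff.2 hVW⟩

lemma map_infty_eq [FirstCountableTopology Y'] (hF : F.HasBasis p s)
    (hs : ∀ i, p i → IsOpen (s i)) (hcount : ¬ F.IsCountablyGenerated)
    (e : PointExtension F ≃ₜ PointExtension F') : e infty = infty := by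
  obtain h | ⟨y, hy⟩ := eq_infty_or_eq_coe (e infty)
  · exact h
  · refine (hcount ?_).elim
    rw [← comap_coe_nhds_infty hF hs, e.isInducing.nhds_eq_comap, hy,
      ← isOpenEmbedding_coe.map_nhds_eq]
    infer_instance

lemma image_range_coe {e : PointExtension F ≃ₜ PointExtension F'} (he : e infty = infty) :
    e '' range (coe : Y → PointExtension F) = range (coe : Y' → PointExtension F') := by
  rw [range_coe, range_coe, image_compl_eq e.bijective, image_singleton, he]

/-- The homeomorphism of the original spaces induced by a homeomorphism of point extensions that
matches the added points. -/
noncomputable def restrict (e : PointExtension F ≃ₜ PointExtension F') (he : e infty = infty) :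
    Y ≃ₜ Y' :=
  homeomorphOfImageRange isOpenEmbedding_coe.toIsEmbedding isOpenEmbedding_coe.toIsEmbedding e
    (image_range_coe he)

lemma comap_restrict {ι' : Type*} {p' : ι' → Prop} {s' : ι' → Set Y'} (hF : F.HasBasis p s)
    (hs : ∀ i, p i → IsOpen (s i)) (hF' : F'.HasBasis p' s') (hs' : ∀ i, p' i → IsOpen (s' i))
    (e : PointExtension F ≃ₜ PointExtension F') (he : e infty = infty) :
    Filter.comap (restrict e he) F' = F := by
  have hcoe : (coe : Y' → PointExtension F') ∘ restrict e he = e ∘ coe :=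
    funext (apply_homeomorphOfImageRange _ _ e (image_range_coe he))
  calc Filter.comap (restrict e he) F'
      = Filter.comap (coe ∘ restrict e he) (𝓝 (infty : PointExtension F')) := by
        rw [← Filter.comap_comap, comap_coe_nhds_infty hF' hs']
    _ = Filter.comap coe (Filter.comap e (𝓝 (e infty))) := by
        rw [hcoe, Filter.comap_comap, he]
    _ = F := by rw [← e.isInducing.nhds_eq_comap, comap_coe_nhds_infty hF hs]

end PointExtension

section KernMap

variable {Y ι κ : Type*} {π : Y → ι}

lemma hasBasis_kernMap {F : Filter Y} {p : κ → Prop} {s : κ → Set Y} (hF : F.HasBasis p s) :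
    (F.kernMap π).HasBasis p fun i ↦ kernImage π (s i) := by
  refine Filter.hasBasis_iff.2 fun t ↦ ⟨fun ⟨u, hu, hut⟩ ↦ ?_, fun ⟨i, hi, hit⟩ ↦ ?_⟩
  · obtain ⟨i, hi, hiu⟩ := hF.mem_iff.1 hu
    exact ⟨i, hi, hut ▸ kernImage_mono hiu⟩
  · exact Filter.mem_of_superset ⟨s i, hF.mem_of_mem hi, rfl⟩ hit

lemma kernMap_comap_of_comp_eq {g : Y ≃ Y} (hg : π ∘ g = π) (F : Filter Y) :
    (Filter.comap g F).kernMap π = F.kernMap π := by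
  have hg' : π ∘ g.symm = π := by rw [Equiv.comp_symm_eq, hg]
  refine eq_of_forall_le_iff fun 𝒢 ↦ ?_
  rw [← Filter.comap_le_iff_le_kernMap, ← Filter.comap_le_iff_le_kernMap,
    ← Filter.map_le_iff_le_comap, ← Filter.comap_equiv_symm, Filter.comap_comap, hg']

end KernMap

section CubeFilter

variable {O Λ : Type*} {d : O → Λ → Bool}

/-- The filter on `O × ℕ` obtained by pulling back the neighbourhoods of a point `T` of the cube
`2 ^ Λ` along `d : O → 2 ^ Λ`. The factor `ℕ` provides a function tending to infinity along the
filter, even if `T` is in the range of `d`. -/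
def cubeFilter (d : O → Λ → Bool) (T : Λ → Bool) : Filter (O × ℕ) :=
  Filter.comap d (𝓝 T) ×ˢ Filter.atTop

lemma hasBasis_cubeFilter (d : O → Λ → Bool) (T : Λ → Bool) :
    (cubeFilter d T).HasBasis (fun _ : Finset Λ × ℕ ↦ True ∧ True)
      fun k ↦ (d ⁻¹' (k.1 : Set Λ).pi fun i ↦ {T i}) ×ˢ Ici k.2 :=
  ((hasBasis_nhds_pi_of_discreteTopology T).comap d).prod Filter.atTop_basis

lemma tendsto_snd_cubeFilter (d : O → Λ → Bool) (T : Λ → Bool) :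
    Filter.Tendsto (fun k ↦ (k.2 : ℝ)) (cubeFilter d T) Filter.atTop :=
  tendsto_natCast_atTop_atTop.comp Filter.tendsto_snd

lemma map_fst_cubeFilter (d : O → Λ → Bool) (T : Λ → Bool) :
    Filter.map Prod.fst (cubeFilter d T) = Filter.comap d (𝓝 T) :=
  Filter.map_fst_prod _ _

lemma cubeFilter_injective (hd : DenseRange d) : (cubeFilter d).Injective := by
  intro T T' h
  have hcomap : Filter.comap d (𝓝 T) = Filter.comap d (𝓝 T') := by
    rw [← map_fst_cubeFilter, h, map_fst_cubeFilter]
  have : (Filter.comap d (𝓝 T)).NeBot := Filter.comap_neBot_iff_frequently.2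
    (mem_closure_iff_frequently.1 (hd T))
  exact tendsto_nhds_unique (f := d) Filter.tendsto_comap (hcomap ▸ Filter.tendsto_comap)

lemma mk_le_of_hasBasis_cubeFilter {O Λ κ : Type} {d : O → Λ → Bool} (hd : DenseRange d)
    {T : Λ → Bool} {p : κ → Prop} {s : κ → Set (O × ℕ)} (h : (cubeFilter d T).HasBasis p s) :
    #Λ ≤ #{k // p k} * ℵ₀ :=
  mk_le_of_hasBasis_comap_nhds hd (map_fst_cubeFilter d T ▸ h.map Prod.fst)

end CubeFilter

section EndFilter

variable {Y ι κ : Type*}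

/-- The filter on `Y` generated by the sets `{y | r < h y ∨ π y ∈ s}` with `s ∈ 𝒢`: the ends of `Y`
in the direction of increasing height `h`, together with the pieces of `Y` whose index `π y` is
`𝒢`-large. -/
def endFilter (h : Y → ℝ) (π : Y → ι) (𝒢 : Filter ι) : Filter Y :=
  Filter.comap h Filter.atTop ⊔ Filter.comap π 𝒢

/-- Every point lies on a ray that keeps the index `π` and along which the height `h` grows at unit
speed at least. -/
def HasEscapingRays [TopologicalSpace Y] (h : Y → ℝ) (π : Y → ι) : Prop :=
  ∀ y, ∃ γ : NNReal → Y, Continuous γ ∧ γ 0 = y ∧ ∀ r, π (γ r) = π y ∧ h y + r ≤ h (γ r)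

variable {h : Y → ℝ} {π : Y → ι} {𝒢 𝒢' : Filter ι} {p : κ → Prop} {s : κ → Set ι}

lemma hasBasis_endFilter_Ioi (h : Y → ℝ) (π : Y → ι) (h𝒢 : 𝒢.HasBasis p s) :
    (endFilter h π 𝒢).HasBasis (fun k : ℝ × κ ↦ True ∧ p k.2)
      fun k ↦ h ⁻¹' Ioi k.1 ∪ π ⁻¹' s k.2 :=
  (Filter.atTop_basis_Ioi.comap h).sup (h𝒢.comap π)

lemma hasBasis_endFilter_Ici (h : Y → ℝ) (π : Y → ι) (h𝒢 : 𝒢.HasBasis p s) :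
    (endFilter h π 𝒢).HasBasis (fun k : ℝ × κ ↦ True ∧ p k.2)
      fun k ↦ h ⁻¹' Ici k.1 ∪ π ⁻¹' s k.2 :=
  (Filter.atTop_basis.comap h).sup (h𝒢.comap π)

lemma tendsto_max_endFilter {c : ι → ℝ} (hc : Filter.Tendsto c 𝒢 Filter.atTop) :
    Filter.Tendsto (fun y ↦ max (h y) (c (π y))) (endFilter h π 𝒢) Filter.atTop :=
  (Filter.tendsto_atTop_mono (fun _ ↦ le_max_left _ _) Filter.tendsto_comap).sup
    (Filter.tendsto_atTop_mono (fun _ ↦ le_max_right _ _) (hc.comp Filter.tendsto_comap))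

lemma kernMap_endFilter (hfib : ∀ i, ∃ y, π y = i ∧ h y ≤ 0) :
    (endFilter h π 𝒢).kernMap π = 𝒢 := by
  refine le_antisymm (fun s hs ↦ ?_) (Filter.comap_le_iff_le_kernMap.1 le_sup_right)
  refine Filter.mem_of_superset ⟨_, (hasBasis_endFilter_Ioi h π 𝒢.basis_sets).mem_of_mem
    (i := (0, s)) ⟨trivial, hs⟩, rfl⟩ fun i hi ↦ ?_
  obtain ⟨y, rfl, hy⟩ := hfib i
  exact (hi rfl).resolve_left hy.not_gt

lemma not_isCountablyGenerated_endFilter {Y O Λ : Type} {h : Y → ℝ} {π : Y → O × ℕ}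
    (hfib : ∀ i, ∃ y, π y = i ∧ h y ≤ 0) {d : O → Λ → Bool} (hd : DenseRange d) (T : Λ → Bool)
    (hΛ : ℵ₀ < #Λ) : ¬ (endFilter h π (cubeFilter d T)).IsCountablyGenerated := by
  intro hcount
  obtain ⟨s, hs⟩ := (endFilter h π (cubeFilter d T)).exists_antitone_basis
  have hle : #Λ ≤ #{_n : ℕ // True} * ℵ₀ := mk_le_of_hasBasis_cubeFilter hd
    (kernMap_endFilter (𝒢 := cubeFilter d T) hfib ▸ hasBasis_kernMap hs.toHasBasis)
  refine hΛ.not_ge (hle.trans ?_)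
  calc #{_n : ℕ // True} * ℵ₀ ≤ ℵ₀ * ℵ₀ := by gcongr; exact mk_le_aleph0
    _ = ℵ₀ := aleph0_mul_aleph0

variable [TopologicalSpace Y]

lemma HasEscapingRays.isPathConnected (hray : HasEscapingRays h π) (r : ℝ) (s : Set ι) :
    IsPathConnected (insert (PointExtension.infty : PointExtension (endFilter h π 𝒢))
      (PointExtension.coe '' (h ⁻¹' Ioi r ∪ π ⁻¹' s))) := by
  refine PointExtension.isPathConnected_insert_infty fun y hy ↦ ?_
  obtain ⟨γ, hγ, hγ0, hγy⟩ := hray y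
  refine ⟨γ, hγ, hγ0, ?_, fun t ↦ hy.imp (fun h' ↦ ?_) fun h' ↦ ?_⟩
  · refine Filter.Tendsto.mono_right (Filter.tendsto_comap_iff.2 ?_) le_sup_left
    exact Filter.tendsto_atTop_mono (fun t ↦ (hγy t).2) <|
      Filter.tendsto_atTop_add_const_left _ _ (NNReal.tendsto_coe_atTop.2 Filter.tendsto_id)
  · exact h'.trans_le ((le_add_of_nonneg_right t.2).trans (hγy t).2)
  · rwa [mem_preimage, (hγy t).1]

lemma HasEscapingRays.pathConnectedSpace (hray : HasEscapingRays h π) :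
    PathConnectedSpace (PointExtension (endFilter h π 𝒢)) := by
  rw [pathConnectedSpace_iff_univ]
  convert hray.isPathConnected (𝒢 := 𝒢) 0 univ
  rw [preimage_univ, union_univ, image_univ, PointExtension.range_coe, insert_eq, union_compl_self]

variable [TopologicalSpace ι] [DiscreteTopology ι]

lemma isOpen_preimage_Ioi_union (hh : Continuous h) (hπ : Continuous π) (r : ℝ) (s : Set ι) :
    IsOpen (h ⁻¹' Ioi r ∪ π ⁻¹' s) :=
  (isOpen_Ioi.preimage hh).union ((isOpen_discrete s).preimage hπ)

lemma HasEscapingRays.locallyPathConnectedSpace [LocallyPathConnectedSpace Y]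
    (hray : HasEscapingRays h π) (hh : Continuous h) (hπ : Continuous π) :
    LocallyPathConnectedSpace (PointExtension (endFilter h π 𝒢)) :=
  PointExtension.locallyPathConnectedSpace (hasBasis_endFilter_Ioi h π 𝒢.basis_sets)
    (fun k _ ↦ isOpen_preimage_Ioi_union hh hπ k.1 k.2) fun k _ ↦ hray.isPathConnected k.1 k.2

lemma almostMetrizable_pointExtension_endFilter {Y : Type} [TopologicalSpace Y]
    [TopologicalSpace.MetrizableSpace Y] {h : Y → ℝ} {π : Y → ι} (hh : Continuous h)
    (hπ : Continuous π) {c : ι → ℝ} (hc : Filter.Tendsto c 𝒢 Filter.atTop) :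
    AlmostMetrizable (PointExtension (endFilter h π 𝒢)) :=
  PointExtension.almostMetrizable (hasBasis_endFilter_Ioi h π 𝒢.basis_sets)
    (fun k _ ↦ isOpen_preimage_Ioi_union hh hπ k.1 k.2)
    (hasBasis_endFilter_Ici h π 𝒢.basis_sets)
    (fun k _ ↦ (isClosed_Ici.preimage hh).union ((isClosed_discrete k.2).preimage hπ))
    (tendsto_max_endFilter hc)

lemma eq_of_homeomorph_pointExtension_endFilter (hh : Continuous h) (hπ : Continuous π)
    (hfib : ∀ i, ∃ y, π y = i ∧ h y ≤ 0) (hrigid : ∀ g : Y ≃ₜ Y, π ∘ g = π)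
    (e : PointExtension (endFilter h π 𝒢) ≃ₜ PointExtension (endFilter h π 𝒢'))
    (he : e PointExtension.infty = PointExtension.infty) : 𝒢 = 𝒢' := by
  have hopen (k : ℝ × Set ι) : IsOpen (h ⁻¹' Ioi k.1 ∪ π ⁻¹' k.2) :=
    isOpen_preimage_Ioi_union hh hπ k.1 k.2
  let g := PointExtension.restrict e he
  calc 𝒢 = (endFilter h π 𝒢).kernMap π := (kernMap_endFilter hfib).symm
    _ = (Filter.comap g (endFilter h π 𝒢')).kernMap π := by
        rw [PointExtension.comap_restrict (hasBasis_endFilter_Ioi h π 𝒢.basis_sets)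
          (fun k _ ↦ hopen k) (hasBasis_endFilter_Ioi h π 𝒢'.basis_sets) fun k _ ↦ hopen k]
    _ = (endFilter h π 𝒢').kernMap π := kernMap_comap_of_comp_eq (g := g.toEquiv) (hrigid g) _
    _ = 𝒢' := kernMap_endFilter hfib

end EndFilter

section WeightOfExtension

variable {Y O Λ : Type} [TopologicalSpace Y] [TopologicalSpace O] [DiscreteTopology O]
  {h : Y → ℝ} {π : Y → O × ℕ} {d : O → Λ → Bool}

lemma mk_le_tweight_mul_aleph0 (hh : Continuous h) (hπ : Continuous π)
    (hfib : ∀ i, ∃ y, π y = i ∧ h y ≤ 0) (hd : DenseRange d) (T : Λ → Bool) :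
    #Λ ≤ tweight (PointExtension (endFilter h π (cubeFilter d T))) * ℵ₀ := by
  obtain ⟨B, hB, hBw⟩ := exists_isTopologicalBasis_mk_eq_tweight
    (PointExtension (endFilter h π (cubeFilter d T)))
  have hbasis := (hB.nhds_hasBasis (a := PointExtension.infty)).comap PointExtension.coe
  rw [PointExtension.comap_coe_nhds_infty (hasBasis_endFilter_Ioi h π (Filter.basis_sets _))
    fun k _ ↦ isOpen_preimage_Ioi_union hh hπ k.1 k.2] at hbasis
  have hker := kernMap_endFilter (𝒢 := cubeFilter d T) hfib ▸ hasBasis_kernMap hbasis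
  refine (mk_le_of_hasBasis_cubeFilter hd hker).trans ?_
  rw [← hBw]
  gcongr
  exact mk_subtype_mono fun _ hk ↦ hk.1

lemma tweight_pointExtension_endFilter [FirstCountableTopology Y] (hh : Continuous h)
    (hπ : Continuous π) (hfib : ∀ i, ∃ y, π y = i ∧ h y ≤ 0) (hd : DenseRange d) (T : Λ → Bool)
    (hY : #Y ≤ #Λ) (hΛ : 𝔠 ≤ #Λ) :
    tweight (PointExtension (endFilter h π (cubeFilter d T))) = #Λ := by
  have hΛ0 : ℵ₀ ≤ #Λ := aleph0_le_continuum.trans hΛ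
  have : Infinite Λ := infinite_iff.2 hΛ0
  refine le_antisymm ?_ ?_
  · calc tweight (PointExtension (endFilter h π (cubeFilter d T)))
        ≤ tweight Y + #{_k : ℝ × Finset Λ × ℕ // True ∧ True ∧ True} :=
          PointExtension.tweight_le_add (hasBasis_endFilter_Ioi h π (hasBasis_cubeFilter d T))
            fun k _ ↦ isOpen_preimage_Ioi_union hh hπ k.1 _
      _ ≤ #Y * ℵ₀ + #(ℝ × Finset Λ × ℕ) := add_le_add tweight_le_mk_mul_aleph0 (mk_subtype_le _)
      _ = #Y * ℵ₀ + 𝔠 * (#Λ * ℵ₀) := by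
          simp only [mk_prod, lift_id, mk_real, mk_finset_of_infinite, mk_nat]
      _ ≤ #Λ * #Λ + #Λ * (#Λ * #Λ) := by gcongr
      _ = #Λ := by rw [mul_eq_self hΛ0, mul_eq_self hΛ0, add_eq_self hΛ0]
  · have hle := (mk_le_tweight_mul_aleph0 hh hπ hfib hd T).trans (mul_le_max _ _)
    rw [max_assoc, max_self, le_max_iff] at hle
    exact hle.resolve_right (aleph0_lt_continuum.trans_le hΛ).not_ge

end WeightOfExtension

section LocalCutPoint

variable {X Y : Type*} [TopologicalSpace X] [TopologicalSpace Y]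

/-- A point `x` is a local cut point if it disconnects all its sufficiently small neighbourhoods. -/
def IsLocalCutPoint (x : X) : Prop :=
  ∃ U ∈ 𝓝 x, ∀ V ∈ 𝓝 x, V ⊆ U → ¬ IsPreconnected (V \ {x})

lemma isLocalCutPoint_apply_iff {f : X → Y} (hf : IsOpenEmbedding f) {x : X} :
    IsLocalCutPoint (f x) ↔ IsLocalCutPoint x := by
  have himage (V : Set X) : IsPreconnected (f '' V \ {f x}) ↔ IsPreconnected (V \ {x}) := by
    rw [← image_singleton, ← image_sdiff hf.injective, hf.isInducing.isPreconnected_image]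
  constructor
  · rintro ⟨U, hU, hcut⟩
    refine ⟨f ⁻¹' U, hf.continuous.continuousAt hU, fun V hV hVU hconn ↦ ?_⟩
    exact hcut (f '' V) (hf.image_mem_nhds.2 hV) (image_subset_iff.2 hVU) ((himage V).2 hconn)
  · rintro ⟨U, hU, hcut⟩
    refine ⟨f '' U, hf.image_mem_nhds.2 hU, fun V hV hVU hconn ↦ ?_⟩
    obtain ⟨W, hWU, rfl⟩ := subset_image_iff.1 hVU
    exact hcut W (hf.image_mem_nhds.1 hV) hWU ((himage W).1 hconn)

variable {F : Type*} [NormedAddCommGroup F] [NormedSpace ℝ F]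

lemma isPreconnected_ball_sdiff_center (hF : 1 < Module.rank ℝ F) (x : F) {r : ℝ} (hr : 0 < r) :
    IsPreconnected (Metric.ball x r \ {x}) := by
  let φ := OpenPartialHomeomorph.univBall x r
  have hsource : φ.source = Set.univ := OpenPartialHomeomorph.univBall_source x r
  have hinj : (φ : F → F).Injective := injOn_univ.1 (hsource ▸ φ.injOn)
  have hφ : φ '' {0}ᶜ = Metric.ball x r \ {x} := by
    calc φ '' {0}ᶜ = φ '' φ.source \ φ '' {0} := by
          rw [hsource, compl_eq_univ_sdiff, image_sdiff hinj]
      _ = Metric.ball x r \ {x} := by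
        rw [φ.image_source_eq_target, OpenPartialHomeomorph.univBall_target x hr, image_singleton,
          OpenPartialHomeomorph.univBall_apply_zero]
  rw [← hφ]
  exact (isConnected_compl_singleton_of_one_lt_rank hF 0).isPreconnected.image φ
    (OpenPartialHomeomorph.continuous_univBall x r).continuousOn

lemma not_isLocalCutPoint_of_one_lt_rank (hF : 1 < Module.rank ℝ F) (x : F) :
    ¬ IsLocalCutPoint x := by
  rintro ⟨U, hU, hcut⟩
  obtain ⟨r, hr, hrU⟩ := Metric.mem_nhds_iff.1 hU
  exact hcut _ (Metric.ball_mem_nhds x hr) hrU (isPreconnected_ball_sdiff_center hF x hr)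

end LocalCutPoint

section GluedHalfSpaces

variable {E T : Type*}

/-- The two open half spaces of `E × ℝ`, glued together along a subset `A` of their common boundary
hyperplane. -/
def gluedHalfSpaces (A : Set E) : Set (E × ℝ) := {z | z.2 ≠ 0 ∨ z.1 ∈ A}

/-- The copy of `T` on the boundary hyperplane of the half spaces glued along the range of
`j : T → E`. -/
def zeroSection (j : T → E) (s : T) : gluedHalfSpaces (range j) := ⟨(j s, 0), .inr ⟨s, rfl⟩⟩

lemma range_zeroSection (j : T → E) : range (zeroSection j) = {z | z.1.2 = 0} := by
  ext ⟨⟨x, t⟩, hz⟩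
  constructor
  · rintro ⟨s, hs⟩
    exact (congrArg (fun z : gluedHalfSpaces (range j) ↦ z.1.2) hs).symm
  · rintro (rfl : t = 0)
    obtain ⟨s, rfl⟩ := hz.resolve_left (by simp)
    exact ⟨s, rfl⟩

section TopologicalGluing

variable [TopologicalSpace E] {A : Set E}

lemma exists_ray_gluedHalfSpaces (z : gluedHalfSpaces A) :
    ∃ γ : NNReal → gluedHalfSpaces A, Continuous γ ∧ γ 0 = z ∧
      ∀ r, |(γ r).1.2| = |z.1.2| + r := by
  obtain ⟨σ, hσ⟩ : ∃ σ : ℝ, ∀ r : NNReal, |z.1.2 + σ * r| = |z.1.2| + r := by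
    obtain h | h := le_total 0 z.1.2
    · exact ⟨1, fun r ↦ by
        rw [one_mul, abs_of_nonneg (add_nonneg h r.coe_nonneg), abs_of_nonneg h]⟩
    · exact ⟨-1, fun r ↦ by
        rw [abs_of_nonpos (by linarith [r.coe_nonneg]), abs_of_nonpos h]; ring⟩
  have hmem (r : NNReal) : (z.1.1, z.1.2 + σ * r) ∈ gluedHalfSpaces A := by
    refine z.2.imp (fun hz (h0 : z.1.2 + σ * r = 0) ↦ ?_) id
    have hr := hσ r
    rw [h0, abs_zero] at hr
    linarith [abs_pos.2 hz, r.coe_nonneg]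
  exact ⟨fun r ↦ ⟨_, hmem r⟩, by fun_prop, by simp, hσ⟩

lemma isLocalCutPoint_of_isolated {x : E} (hx : x ∈ A) {U : Set E} (hU : U ∈ 𝓝 x)
    (hUA : U ∩ A ⊆ {x}) : IsLocalCutPoint (⟨(x, 0), .inr hx⟩ : gluedHalfSpaces A) := by
  let f : ℝ → gluedHalfSpaces A := fun t ↦ ⟨(x, t), .inr hx⟩
  let height : gluedHalfSpaces A → ℝ := fun z ↦ z.1.2
  have hf : Continuous f := by fun_prop
  have hheight : Continuous height := by fun_prop
  refine ⟨(fun z ↦ z.1.1) ⁻¹' U, (by fun_prop : Continuous fun z : gluedHalfSpaces A ↦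
    z.1.1).continuousAt hU, fun V hV hVU hconn ↦ ?_⟩
  obtain ⟨δ, hδ, hδV⟩ := Metric.mem_nhds_iff.1 (hf.continuousAt.preimage_mem_nhds hV)
  -- The height maps `V \ {f 0}` to an interval around `0`, but `f 0` is the only point of `V` with
  -- height `0`.
  have hmem {t : ℝ} (ht : |t| = δ / 2) : t ∈ height '' (V \ {f 0}) := by
    refine ⟨f t, ⟨hδV ?_, fun h0 ↦ ?_⟩, rfl⟩
    · rw [Metric.mem_ball, dist_zero_right, Real.norm_eq_abs, ht]
      exact half_lt_self hδ
    · have ht0 : t = 0 := congrArg height h0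
      rw [ht0, abs_zero] at ht
      exact (half_pos hδ).ne ht
  have habs : |δ / 2| = δ / 2 := abs_of_pos (half_pos hδ)
  obtain ⟨z, ⟨hzV, hz0⟩, hz : z.1.2 = 0⟩ : 0 ∈ height '' (V \ {f 0}) :=
    (hconn.image height hheight.continuousOn).Icc_subset (hmem ((abs_neg _).trans habs))
      (hmem habs) ⟨neg_nonpos.2 (half_pos hδ).le, (half_pos hδ).le⟩
  exact hz0 (Subtype.ext (Prod.ext (hUA ⟨hVU hzV, z.2.resolve_left (not_not.2 hz)⟩) hz))

lemma isEmbedding_zeroSection [TopologicalSpace T] {j : T → E} (hj : IsEmbedding j) :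
    IsEmbedding (zeroSection j) :=
  ((isEmbedding_prodMkLeft (0 : ℝ)).comp hj).codRestrict (gluedHalfSpaces (range j))
    fun s ↦ .inr ⟨s, rfl⟩

end TopologicalGluing

variable [NormedAddCommGroup E] [NormedSpace ℝ E] {A : Set E}

lemma joinedIn_gluedHalfSpaces_inter_of_mul_nonneg {C : Set (E × ℝ)} (hC : Convex ℝ C)
    {z w : E × ℝ} (hz : z ∈ gluedHalfSpaces A ∩ C) (hw : w ∈ C) (hw0 : w.2 ≠ 0)
    (hzw : 0 ≤ z.2 * w.2) : JoinedIn (gluedHalfSpaces A ∩ C) z w := by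
  refine JoinedIn.of_segment_subset (subset_inter ?_ (hC.segment_subset hz.2 hw))
  rintro _ ⟨a, b, ha, hb, hab, rfl⟩
  obtain rfl | hb' := hb.eq_or_lt
  · obtain rfl : a = 1 := by simpa using hab
    simpa using hz.1
  · refine .inl fun h0 ↦ ?_
    have h0' : a * z.2 + b * w.2 = 0 := by simpa using h0
    have hpos : 0 < a * (z.2 * w.2) + b * (w.2 * w.2) :=
      add_pos_of_nonneg_of_pos (mul_nonneg ha hzw) (mul_pos hb' (mul_self_pos.2 hw0))
    exact hpos.ne' (by linear_combination w.2 * h0')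

lemma joinedIn_gluedHalfSpaces_inter_zero {C : Set (E × ℝ)} (hC : Convex ℝ C) {x : E} (hx : x ∈ A)
    {δ : ℝ} (hδ : 0 < δ) (hxC : ∀ t, |t| ≤ δ → (x, t) ∈ C) {z : E × ℝ}
    (hz : z ∈ gluedHalfSpaces A ∩ C) : JoinedIn (gluedHalfSpaces A ∩ C) z (x, 0) := by
  obtain ⟨t, ht0, htδ, hzt⟩ : ∃ t : ℝ, t ≠ 0 ∧ |t| ≤ δ ∧ 0 ≤ z.2 * t := by
    obtain h | h := le_total 0 z.2
    · exact ⟨δ, hδ.ne', (abs_of_pos hδ).le, mul_nonneg h hδ.le⟩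
    · exact ⟨-δ, neg_ne_zero.2 hδ.ne', (abs_neg δ).trans_le (abs_of_pos hδ).le,
        mul_nonneg_of_nonpos_of_nonpos h (neg_nonpos.2 hδ.le)⟩
  have hx0 : (x, 0) ∈ gluedHalfSpaces A ∩ C := ⟨.inr hx, hxC 0 (by simpa using hδ.le)⟩
  exact (joinedIn_gluedHalfSpaces_inter_of_mul_nonneg hC hz (hxC t htδ) ht0 hzt).trans
    (joinedIn_gluedHalfSpaces_inter_of_mul_nonneg hC hx0 (hxC t htδ) ht0 (by simp)).symm

lemma isPathConnected_gluedHalfSpaces_inter_ball {x : E × ℝ} (hx : x ∈ gluedHalfSpaces A) {ε : ℝ}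
    (hε : 0 < ε) (hxε : x.2 = 0 ∨ ε ≤ |x.2|) :
    IsPathConnected (gluedHalfSpaces A ∩ Metric.ball x ε) := by
  refine ⟨x, ⟨hx, Metric.mem_ball_self hε⟩, fun {z} hz ↦ JoinedIn.symm ?_⟩
  by_cases hx0 : x.2 = 0
  · obtain ⟨x, t⟩ := x
    obtain rfl : t = 0 := hx0
    refine joinedIn_gluedHalfSpaces_inter_zero (convex_ball _ _) (hx.resolve_left (by simp))
      (half_pos hε) (fun t ht ↦ ?_) hz
    simpa [Prod.dist_eq, hε] using ht.trans_lt (half_lt_self hε)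
  · refine joinedIn_gluedHalfSpaces_inter_of_mul_nonneg (convex_ball _ _) hz
      (Metric.mem_ball_self hε) hx0 ?_
    have hdist : |z.2 - x.2| < |x.2| :=
      ((le_max_right _ _).trans_lt (Metric.mem_ball.1 hz.2)).trans_le (hxε.resolve_left hx0)
    nlinarith [sq_lt_sq.2 hdist, sq_nonneg z.2]

instance : LocallyPathConnectedSpace (gluedHalfSpaces A) := by
  refine ⟨fun x ↦ Filter.hasBasis_self.2 fun U hU ↦ ?_⟩
  obtain ⟨ε, hε, hεU⟩ := Metric.mem_nhds_iff.1 hU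
  obtain ⟨δ, hδ, hδε, hxδ⟩ : ∃ δ > 0, δ ≤ ε ∧ (x.1.2 = 0 ∨ δ ≤ |x.1.2|) := by
    by_cases hx : x.1.2 = 0
    · exact ⟨ε, hε, le_rfl, .inl hx⟩
    · exact ⟨min ε |x.1.2|, lt_min hε (abs_pos.2 hx), min_le_left _ _, .inr (min_le_right _ _)⟩
  refine ⟨Metric.ball x δ, Metric.ball_mem_nhds x hδ, ?_, (Metric.ball_subset_ball hδε).trans hεU⟩
  rw [IsInducing.subtypeVal.isPathConnected_iff]
  change IsPathConnected (Subtype.val '' (Subtype.val ⁻¹' Metric.ball x.1 δ))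
  rw [Subtype.image_preimage_coe]
  exact isPathConnected_gluedHalfSpaces_inter_ball x.2 hδ hxδ

lemma pathConnectedSpace_gluedHalfSpaces (hA : A.Nonempty) :
    PathConnectedSpace (gluedHalfSpaces A) := by
  obtain ⟨x, hx⟩ := hA
  rw [← isPathConnected_iff_pathConnectedSpace, ← inter_univ (gluedHalfSpaces A)]
  exact ⟨(x, 0), ⟨.inr hx, mem_univ _⟩, fun {_} hz ↦ (joinedIn_gluedHalfSpaces_inter_zero
    convex_univ hx one_pos (fun _ _ ↦ mem_univ _) hz).symm⟩

lemma not_isLocalCutPoint_of_snd_ne_zero (hE : 1 < Module.rank ℝ (E × ℝ))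
    {z : gluedHalfSpaces A} (hz : z.1.2 ≠ 0) : ¬ IsLocalCutPoint z := by
  have hopen : IsOpen {p : E × ℝ | p.2 ≠ 0} := isOpen_ne_fun continuous_snd continuous_const
  have hsub : {p : E × ℝ | p.2 ≠ 0} ⊆ gluedHalfSpaces A := fun _ ↦ .inl
  let w : {p : E × ℝ | p.2 ≠ 0} := ⟨z, hz⟩
  have hinc : IsOpenEmbedding (inclusion hsub) :=
    ⟨.inclusion hsub, by rw [range_inclusion]; exact hopen.preimage continuous_subtype_val⟩
  rw [show z = inclusion hsub w from rfl, isLocalCutPoint_apply_iff hinc,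
    ← isLocalCutPoint_apply_iff hopen.isOpenEmbedding_subtypeVal]
  exact not_isLocalCutPoint_of_one_lt_rank hE _

variable {E' T' : Type*} [NormedAddCommGroup E'] [NormedSpace ℝ E'] [TopologicalSpace T]
  [TopologicalSpace T'] {j : T → E} {j' : T' → E'}

lemma closure_setOf_isLocalCutPoint (hE : 1 < Module.rank ℝ (E × ℝ)) (hj : IsEmbedding j)
    (hT : Dense {s : T | IsOpen {s}}) :
    closure {z : gluedHalfSpaces (range j) | IsLocalCutPoint z} = range (zeroSection j) := by
  refine subset_antisymm (closure_minimal (fun z hz ↦ ?_) ?_) ?_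
  · rw [range_zeroSection]
    exact by_contra fun hz0 ↦ not_isLocalCutPoint_of_snd_ne_zero hE hz0 hz
  · rw [range_zeroSection]
    exact isClosed_eq (by fun_prop) continuous_const
  · have hcut : zeroSection j '' {s | IsOpen {s}} ⊆ {z | IsLocalCutPoint z} := by
      rintro _ ⟨s, hs, rfl⟩
      have hnhds : {s} ∈ Filter.comap j (𝓝 (j s)) :=
        hj.isInducing.nhds_eq_comap s ▸ IsOpen.mem_nhds hs rfl
      obtain ⟨U, hU, hUs⟩ := Filter.mem_comap.1 hnhds
      refine isLocalCutPoint_of_isolated (mem_range_self s) hU ?_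
      rintro _ ⟨ht, t, rfl⟩
      exact congrArg j (hUs ht)
    exact ((isEmbedding_zeroSection hj).continuous.range_subset_closure_image_dense hT).trans
      (closure_mono hcut)

/-- If the isolated points of `T` and `T'` are dense, a homeomorphism between the half spaces glued
along `T` and `T'` restricts to one between `T` and `T'`. -/
noncomputable def homeomorphOfGluedHalfSpaces (hE : 1 < Module.rank ℝ (E × ℝ))
    (hE' : 1 < Module.rank ℝ (E' × ℝ)) (hj : IsEmbedding j) (hj' : IsEmbedding j')
    (hT : Dense {s : T | IsOpen {s}}) (hT' : Dense {s : T' | IsOpen {s}})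
    (e : gluedHalfSpaces (range j) ≃ₜ gluedHalfSpaces (range j')) : T ≃ₜ T' :=
  homeomorphOfImageRange (isEmbedding_zeroSection hj) (isEmbedding_zeroSection hj') e <| by
    rw [← closure_setOf_isLocalCutPoint hE hj hT, ← closure_setOf_isLocalCutPoint hE' hj' hT',
      e.image_closure, e.image_eq_preimage_symm]
    congr 1
    ext z
    exact isLocalCutPoint_apply_iff e.symm.isOpenEmbedding

end GluedHalfSpaces

section CantorBendixsonRank

variable {X X' O : Type*} [TopologicalSpace X] [TopologicalSpace X']

/-- `r` is the Cantor–Bendixson rank function of the scattered space `X`: the values of `r` near but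
off `x` are exactly those below `r x`, each of them being taken arbitrarily close to `x`. -/
structure IsCantorBendixsonRank [LT O] (r : X → O) : Prop where
  eventually_lt (x : X) : ∀ᶠ y in 𝓝[≠] x, r y < r x
  frequently_eq (x : X) {b : O} (hb : b < r x) : ∃ᶠ y in 𝓝[≠] x, r y = b

variable [LinearOrder O] [WellFoundedLT O] {r : X → O} {r' : X' → O}

namespace IsCantorBendixsonRank

lemma dense_setOf_isOpen_singleton (hr : IsCantorBendixsonRank r) : Dense {x : X | IsOpen {x}} := by
  suffices h : ∀ a x, r x = a → x ∈ closure {x : X | IsOpen {x}} from fun x ↦ h _ x rfl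
  intro a
  induction a using WellFoundedLT.induction with | ind a ih
  rintro x rfl
  by_cases hx : ∃ b, b < r x
  · obtain ⟨b, hb⟩ := hx
    have hfreq := (hr.frequently_eq x hb).mono (ih b hb)
    exact isClosed_closure.mem_of_frequently_of_tendsto hfreq nhdsWithin_le_nhds
  · refine subset_closure ((isOpen_singleton_iff_punctured_nhds x).2 ?_)
    exact Filter.eventually_false_iff_eq_bot.1
      ((hr.eventually_lt x).mono fun y hy ↦ hx ⟨_, hy⟩)

lemma le_apply (hr : IsCantorBendixsonRank r) (hr' : IsCantorBendixsonRank r') {f : X → X'}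
    (hf : Continuous f) (hinj : f.Injective) (x : X) : r x ≤ r' (f x) := by
  suffices h : ∀ a x, r x = a → r x ≤ r' (f x) from h _ x rfl
  intro a
  induction a using WellFoundedLT.induction with | ind a ih
  rintro x rfl
  refine le_of_forall_lt fun b hb ↦ ?_
  have hlt : ∀ᶠ y in 𝓝[≠] x, r' (f y) < r' (f x) :=
    (hf.continuousAt.tendsto.inf (Filter.tendsto_principal_principal.2
      fun _ ↦ hinj.ne)).eventually (hr'.eventually_lt (f x))
  obtain ⟨y, rfl, hy⟩ := ((hr.frequently_eq x hb).and_eventually hlt).exists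
  exact (ih _ hb y rfl).trans_lt hy

end IsCantorBendixsonRank

end CantorBendixsonRank

section DescendingTree

variable {O : Type*}

/-- The weight of a sequence in the supremum norm, small if the first entry of its head is large. -/
noncomputable def nodeWeight : List (ℕ × O) → ℝ
  | [] => 1
  | a :: _ => 1 / ((a.1 : ℝ) + 1)

lemma nodeWeight_pos (s : List (ℕ × O)) : 0 < nodeWeight s := by
  cases s <;> simp only [nodeWeight] <;> positivity

lemma nodeWeight_le_one (s : List (ℕ × O)) : nodeWeight s ≤ 1 := by
  cases s with
  | nil => exact le_rfl
  | cons a s => exact div_le_one_of_le₀ (by simp) (by positivity)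

lemma abs_indicator_nodeWeight_le_one (S : Set (List (ℕ × O))) (p : List (ℕ × O)) :
    |S.indicator nodeWeight p| ≤ 1 := by
  by_cases hp : p ∈ S
  · rw [indicator_of_mem hp, abs_of_pos (nodeWeight_pos p)]
    exact nodeWeight_le_one p
  · rw [indicator_of_notMem hp, abs_zero]
    exact zero_le_one

/-- The vector of `ℓ^∞` representing the finite sequence `s`: it is supported on the suffixes of
`s`, so that `node s` is approached by the vectors `node (a :: s)`. -/
noncomputable def node (s : List (ℕ × O)) : lp (fun _ : List (ℕ × O) ↦ ℝ) ⊤ :=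
  ⟨{p | p <:+ s}.indicator nodeWeight,
    memℓp_infty ⟨1, forall_mem_range.2 (abs_indicator_nodeWeight_le_one _)⟩⟩

lemma node_apply_of_isSuffix {s p : List (ℕ × O)} (h : p <:+ s) : node s p = nodeWeight p :=
  indicator_of_mem (s := {p | p <:+ s}) h nodeWeight

lemma node_apply_of_not_isSuffix {s p : List (ℕ × O)} (h : ¬ p <:+ s) : node s p = 0 :=
  indicator_of_notMem (s := {p | p <:+ s}) h nodeWeight

lemma isSuffix_of_norm_node_sub_lt {s t : List (ℕ × O)} (h : ‖node t - node s‖ < nodeWeight s) :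
    s <:+ t := by
  by_contra hst
  have heval : (node t - node s) s = -nodeWeight s := by
    rw [lp.coeFn_sub, Pi.sub_apply, node_apply_of_not_isSuffix hst,
      node_apply_of_isSuffix s.suffix_refl, zero_sub]
  have hle := lp.norm_apply_le_norm ENNReal.top_ne_zero (node t - node s) s
  rw [heval, norm_neg, Real.norm_of_nonneg (nodeWeight_pos s).le] at hle
  exact h.not_ge hle

lemma node_injective : (node : List (ℕ × O) → _).Injective := by
  have hsuffix {s t : List (ℕ × O)} (h : node s = node t) : s <:+ t :=
    isSuffix_of_norm_node_sub_lt (by rw [h, sub_self, norm_zero]; exact nodeWeight_pos s)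
  exact fun s t h ↦ (hsuffix h).eq_of_length_le (hsuffix h.symm).length_le

lemma norm_node_cons_sub_node_le (a : ℕ × O) (s : List (ℕ × O)) :
    ‖node (a :: s) - node s‖ ≤ 1 / ((a.1 : ℝ) + 1) := by
  refine lp.norm_le_of_forall_le (by positivity) fun p ↦ ?_
  rw [lp.coeFn_sub, Pi.sub_apply, Real.norm_eq_abs]
  by_cases hps : p <:+ s
  · rw [node_apply_of_isSuffix (hps.trans (s.suffix_cons a)), node_apply_of_isSuffix hps, sub_self,
      abs_zero]
    positivity
  rw [node_apply_of_not_isSuffix hps, sub_zero]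
  by_cases hp : p = a :: s
  · rw [hp, node_apply_of_isSuffix (List.suffix_refl _), abs_of_pos (nodeWeight_pos _), nodeWeight]
  · rw [node_apply_of_not_isSuffix fun h ↦ (List.suffix_cons_iff.1 h).elim hp hps, abs_zero]
    positivity

lemma tendsto_node_cons (b : O) (s : List (ℕ × O)) :
    Filter.Tendsto (fun n ↦ node ((n, b) :: s)) Filter.atTop (𝓝 (node s)) :=
  tendsto_iff_norm_sub_tendsto_zero.2 <| squeeze_zero (fun _ ↦ norm_nonneg _)
    (fun n ↦ norm_node_cons_sub_node_le (n, b) s) tendsto_one_div_add_atTop_nhds_zero_nat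

variable (O) in
/-- The normed space spanned by the vectors `node s`; its cardinality is controlled by that of
`O`, unlike the cardinality of the ambient `ℓ^∞`. -/
noncomputable abbrev nodeSpan : Submodule ℝ (lp (fun _ : List (ℕ × O) ↦ ℝ) ⊤) :=
  Submodule.span ℝ (range node)

instance : Nontrivial (nodeSpan O) := by
  refine ⟨⟨node [], Submodule.subset_span (mem_range_self _)⟩, 0, fun h ↦ ?_⟩
  have hnode : node ([] : List (ℕ × O)) = 0 := congrArg Subtype.val h
  refine (nodeWeight_pos ([] : List (ℕ × O))).ne' ?_
  rw [← node_apply_of_isSuffix (List.suffix_refl _), hnode, lp.coeFn_zero, Pi.zero_apply]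

lemma mk_nodeSpan_le (hO : 𝔠 ≤ #O) : #(nodeSpan O) ≤ #O := by
  have : Infinite O := infinite_iff.2 (aleph0_le_continuum.trans hO)
  have hlist : #(List (ℕ × O)) = #O := by
    rw [mk_list_eq_mk, mk_prod, lift_uzero, mk_nat, lift_aleph0]
    exact aleph0_mul_mk_eq
  have hspan : (nodeSpan O : Set _) = range (Finsupp.linearCombination ℝ (node (O := O))) := by
    rw [← LinearMap.coe_range, Finsupp.range_linearCombination]
  calc #(nodeSpan O) = #(range (Finsupp.linearCombination ℝ (node (O := O)))) :=
        congrArg (fun s : Set _ ↦ #s) hspan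
    _ ≤ #(List (ℕ × O) →₀ ℝ) := mk_range_le
    _ = max #O 𝔠 := by
      rw [mk_finsupp_lift_of_infinite, hlist, lift_uzero, mk_real, lift_continuum]
    _ = #O := max_eq_left hO

lemma one_lt_rank_prod (E : Type*) [NormedAddCommGroup E] [NormedSpace ℝ E] [Nontrivial E] :
    1 < Module.rank ℝ (E × ℝ) := by
  have hE : 1 ≤ Module.rank ℝ E := Cardinal.one_le_iff_pos.2 rank_pos
  calc (1 : Cardinal) < 1 + 1 := by norm_num
    _ ≤ Module.rank ℝ E + 1 := by gcongr
    _ = Module.rank ℝ (E × ℝ) := by rw [rank_prod, Module.rank_self]; simp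

variable [LinearOrder O]

/-- The rank in `DescendingTree α` of a sequence: the label of its head, or `α` for the root. -/
def labelRank (α : O) : List (ℕ × O) → O
  | [] => α
  | a :: _ => a.2

/-- A sequence is descending below `α` if its labels, read from the last entry to the head, form a
strictly decreasing sequence of elements below `α`. -/
def IsDescendingBelow (α : O) : List (ℕ × O) → Prop
  | [] => True
  | a :: s => a.2 < labelRank α s ∧ IsDescendingBelow α s

lemma labelRank_lt_of_isSuffix {α : O} {s t : List (ℕ × O)} (h : s <:+ t)
    (ht : IsDescendingBelow α t) (hne : t ≠ s) : labelRank α t < labelRank α s := by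
  induction t with
  | nil => exact absurd (List.suffix_nil.1 h).symm hne
  | cons a t ih =>
    obtain rfl | h := List.suffix_cons_iff.1 h
    · exact absurd rfl hne
    · obtain rfl | hts := eq_or_ne t s
      · exact ht.1
      · exact ht.1.trans (ih h ht.2 hts)

lemma labelRank_le {α : O} {s : List (ℕ × O)} (hs : IsDescendingBelow α s) : labelRank α s ≤ α := by
  obtain rfl | hne := eq_or_ne s []
  · exact le_rfl
  · exact (labelRank_lt_of_isSuffix s.nil_suffix hs hne).le

/-- The tree of sequences descending below `α`, a scattered space whose root has Cantor–Bendixson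
rank `α`. The entries in `ℕ` provide infinitely many children with each admissible label, converging
to their parent. -/
def DescendingTree (α : O) : Type _ := {s : List (ℕ × O) // IsDescendingBelow α s}

namespace DescendingTree

variable {α β : O}

/-- The inclusion of the tree into `nodeSpan O`. -/
noncomputable def toNodeSpan (s : DescendingTree α) : nodeSpan O :=
  ⟨node s.1, Submodule.subset_span (mem_range_self _)⟩

noncomputable instance : TopologicalSpace (DescendingTree α) := .induced toNodeSpan inferInstance

lemma isEmbedding_toNodeSpan : IsEmbedding (toNodeSpan : DescendingTree α → nodeSpan O) :=
  ⟨⟨rfl⟩, fun _ _ h ↦ Subtype.ext (node_injective (congrArg Subtype.val h))⟩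

lemma isEmbedding_node : IsEmbedding fun s : DescendingTree α ↦ node s.1 :=
  IsEmbedding.subtypeVal.comp isEmbedding_toNodeSpan

/-- The root of the tree, the empty sequence. -/
def root (α : O) : DescendingTree α := ⟨[], trivial⟩

lemma isCantorBendixsonRank :
    IsCantorBendixsonRank fun s : DescendingTree α ↦ labelRank α s.1 where
  eventually_lt s := by
    have hnear : ∀ᶠ t : DescendingTree α in 𝓝 s, ‖node t.1 - node s.1‖ < nodeWeight s.1 :=
      isEmbedding_node.continuous.continuousAt.eventually
        (eventually_norm_sub_lt (node s.1) (nodeWeight_pos s.1))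
    filter_upwards [nhdsWithin_le_nhds hnear, self_mem_nhdsWithin] with t ht hne
    exact labelRank_lt_of_isSuffix (isSuffix_of_norm_node_sub_lt ht) t.2
      fun h ↦ hne (Subtype.ext h)
  frequently_eq s b hb := by
    let child (n : ℕ) : DescendingTree α := ⟨(n, b) :: s.1, hb, s.2⟩
    have hchild : Filter.Tendsto child Filter.atTop (𝓝[≠] s) :=
      tendsto_nhdsWithin_iff.2 ⟨isEmbedding_node.tendsto_nhds_iff.2 (tendsto_node_cons b s.1),
        .of_forall fun n h ↦ List.cons_ne_self _ _ (congrArg Subtype.val h)⟩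
    exact hchild.frequently (Filter.Frequently.of_forall fun _ ↦ rfl)

lemma eq_of_homeomorph [WellFoundedLT O] (e : DescendingTree α ≃ₜ DescendingTree β) : α = β := by
  have hle {α β : O} (e : DescendingTree α ≃ₜ DescendingTree β) : α ≤ β :=
    (isCantorBendixsonRank.le_apply isCantorBendixsonRank e.continuous e.injective (root α)).trans
      (labelRank_le (e (root α)).2)
  exact (hle e).antisymm (hle e.symm)

end DescendingTree

end DescendingTree

section SigmaComponents

variable {ι : Type*} {X : ι → Type*} [∀ i, TopologicalSpace (X i)] [∀ i, ConnectedSpace (X i)]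

lemma range_sigmaMk_eq_connectedComponent (z : Σ i, X i) :
    range (Sigma.mk z.1) = connectedComponent z :=
  (isConnected_range continuous_sigmaMk).isPreconnected.subset_connectedComponent
    (mem_range_self z.2) |>.antisymm
    (isClopen_range_sigmaMk.connectedComponent_subset (mem_range_self z.2))

lemma fst_comp_homeomorph_sigma (hX : ∀ i j, Nonempty (X i ≃ₜ X j) → i = j)
    (g : (Σ i, X i) ≃ₜ Σ i, X i) : Sigma.fst ∘ g = Sigma.fst := by
  funext z
  have hrange : g '' range (Sigma.mk z.1) = range (Sigma.mk (g z).1) := by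
    rw [range_sigmaMk_eq_connectedComponent, range_sigmaMk_eq_connectedComponent,
      ← connectedComponentIn_univ, ← connectedComponentIn_univ,
      g.image_connectedComponentIn (mem_univ z), image_univ, g.surjective.range_eq]
  exact (hX _ _ ⟨homeomorphOfImageRange IsEmbedding.sigmaMk IsEmbedding.sigmaMk g hrange⟩).symm

end SigmaComponents

section TreeSpace

universe u

variable {O ι : Type*} [LinearOrder O]

/-- Two half spaces glued along the tree of sequences descending below `α`. -/
abbrev treeSpace (α : O) : Set (nodeSpan O × ℝ) :=
  gluedHalfSpaces (range (DescendingTree.toNodeSpan : DescendingTree α → nodeSpan O))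

instance (α : O) : PathConnectedSpace (treeSpace α) :=
  pathConnectedSpace_gluedHalfSpaces ⟨_, mem_range_self (DescendingTree.root α)⟩

lemma eq_of_homeomorph_treeSpace [WellFoundedLT O] {α β : O} (e : treeSpace α ≃ₜ treeSpace β) :
    α = β :=
  DescendingTree.eq_of_homeomorph <| homeomorphOfGluedHalfSpaces (one_lt_rank_prod _)
    (one_lt_rank_prod _) DescendingTree.isEmbedding_toNodeSpan
    DescendingTree.isEmbedding_toNodeSpan
    DescendingTree.isCantorBendixsonRank.dense_setOf_isOpen_singleton
    DescendingTree.isCantorBendixsonRank.dense_setOf_isOpen_singleton e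

/-- The disjoint union of the spaces `treeSpace (ℓ i)`. -/
abbrev TreeSum (ℓ : ι → O) : Type _ := Σ i, treeSpace (ℓ i)

namespace TreeSum

variable {ℓ : ι → O}

/-- The distance to the hyperplane along which the half spaces are glued. -/
def height (z : TreeSum ℓ) : ℝ := |z.2.1.2|

instance : TopologicalSpace.MetrizableSpace (TreeSum ℓ) :=
  letI : MetricSpace (TreeSum ℓ) := Metric.Sigma.metricSpace
  inferInstance

lemma continuous_height : Continuous (height : TreeSum ℓ → ℝ) :=
  continuous_sigma fun _ ↦ by unfold height; fun_prop

lemma continuous_fst [TopologicalSpace ι] : Continuous (Sigma.fst : TreeSum ℓ → ι) :=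
  continuous_sigma fun _ ↦ continuous_const

lemma hasEscapingRays_height : HasEscapingRays (height : TreeSum ℓ → ℝ) Sigma.fst := by
  rintro ⟨i, z⟩
  obtain ⟨γ, hγ, hγ0, hheight⟩ := exists_ray_gluedHalfSpaces z
  exact ⟨fun r ↦ ⟨i, γ r⟩, continuous_sigmaMk.comp hγ, congrArg (Sigma.mk i) hγ0,
    fun r ↦ ⟨rfl, (hheight r).ge⟩⟩

lemma exists_fst_eq_height_nonpos (i : ι) : ∃ z : TreeSum ℓ, z.1 = i ∧ height z ≤ 0 :=
  ⟨⟨i, zeroSection _ (DescendingTree.root (ℓ i))⟩, rfl, abs_zero.le⟩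

lemma fst_comp_homeomorph [WellFoundedLT O] (hℓ : ℓ.Injective) (g : TreeSum ℓ ≃ₜ TreeSum ℓ) :
    Sigma.fst ∘ g = Sigma.fst :=
  fst_comp_homeomorph_sigma (fun _ _ ⟨e⟩ ↦ hℓ (eq_of_homeomorph_treeSpace e)) g

lemma mk_treeSum {O ι : Type u} [LinearOrder O] (ℓ : ι ≃ O) (hO : 𝔠 ≤ #O) :
    #(TreeSum ℓ) = #O := by
  have hO0 : ℵ₀ ≤ #O := aleph0_le_continuum.trans hO
  have hι : #ι = #O := mk_congr ℓ
  refine le_antisymm ?_ ?_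
  · have hinj : (fun z : TreeSum ℓ ↦ (z.1, z.2.1)).Injective := by
      rintro ⟨i, z⟩ ⟨j, w⟩ h
      obtain rfl : i = j := congrArg Prod.fst h
      exact congrArg (Sigma.mk i) (Subtype.ext (congrArg Prod.snd h))
    calc #(TreeSum ℓ) ≤ #(ι × nodeSpan O × ℝ) := mk_le_of_injective hinj
      _ = #O * (#(nodeSpan O) * 𝔠) := by
        simp only [mk_prod, lift_id, lift_uzero, mk_real, lift_continuum, hι]
      _ ≤ #O * (#O * #O) := by gcongr; exact mk_nodeSpan_le hO
      _ = #O := by rw [mul_eq_self hO0, mul_eq_self hO0]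
  · rw [← hι]
    exact mk_le_of_surjective (f := Sigma.fst) fun i ↦
      (exists_fst_eq_height_nonpos (ℓ := ℓ) i).imp fun _ ↦ And.left

end TreeSum

end TreeSpace

section Family

variable {Y O Λ : Type} [TopologicalSpace Y] [TopologicalSpace O] [DiscreteTopology O]
  {h : Y → ℝ} {π : Y → O × ℕ} {d : O → Λ → Bool}

lemma eq_of_homeomorph_pointExtension_cubeFilter [FirstCountableTopology Y] (hh : Continuous h)
    (hπ : Continuous π) (hfib : ∀ i, ∃ y, π y = i ∧ h y ≤ 0) (hrigid : ∀ g : Y ≃ₜ Y, π ∘ g = π)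
    (hd : DenseRange d) (hΛ : ℵ₀ < #Λ) {T T' : Λ → Bool}
    (e : PointExtension (endFilter h π (cubeFilter d T)) ≃ₜ
      PointExtension (endFilter h π (cubeFilter d T'))) : T = T' := by
  have he : e PointExtension.infty = PointExtension.infty :=
    PointExtension.map_infty_eq (hasBasis_endFilter_Ioi h π (Filter.basis_sets _))
      (fun k _ ↦ isOpen_preimage_Ioi_union hh hπ k.1 k.2)
      (not_isCountablyGenerated_endFilter hfib hd T hΛ) e
  exact cubeFilter_injective hd
    (eq_of_homeomorph_pointExtension_endFilter hh hπ hfib hrigid e he)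

lemma existsNonHomeoFamily_pointExtension [TopologicalSpace.MetrizableSpace Y]
    [LocallyPathConnectedSpace Y] (hh : Continuous h) (hπ : Continuous π)
    (hray : HasEscapingRays h π) (hfib : ∀ i, ∃ y, π y = i ∧ h y ≤ 0)
    (hrigid : ∀ g : Y ≃ₜ Y, π ∘ g = π) (hd : DenseRange d) (hY : ℵ₀ ≤ #Y) (hYΛ : #Y ≤ #Λ)
    (hΛ : 𝔠 ≤ #Λ) :
    ExistsNonHomeoFamily (2 ^ #Λ) fun X t ↦
      letI := t
      PathConnectedSpace X ∧ LocallyPathConnectedSpace X ∧ AlmostMetrizable X ∧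
        #X = #Y ∧ tweight X = #Λ := by
  refine ⟨Λ → Bool, fun T ↦ PointExtension (endFilter h π (cubeFilter d T)),
    fun _ ↦ inferInstance, by simp, fun T ↦ ?_, fun T T' hne ↦ ⟨fun e ↦ hne ?_⟩⟩
  · exact ⟨hray.pathConnectedSpace, hray.locallyPathConnectedSpace hh hπ,
      almostMetrizable_pointExtension_endFilter hh hπ (tendsto_snd_cubeFilter d T),
      (PointExtension.mk_eq _).trans (add_one_eq hY),
      tweight_pointExtension_endFilter hh hπ hfib hd T hYΛ hΛ⟩
  · exact eq_of_homeomorph_pointExtension_cubeFilter hh hπ hfib hrigid hd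
      (aleph0_lt_continuum.trans_le hΛ) e

end Family

/-- Theorem 2: if `𝔠 ≤ κ ≤ λ ≤ 2 ^ κ`, then there exist `2 ^ λ` mutually
non-homeomorphic pathwise connected, locally pathwise connected, almost metrizable
spaces of cardinality `κ` and weight `λ`. -/
theorem stmt12 (κ lam : Cardinal) (h0 : Cardinal.continuum ≤ κ)
    (h1 : κ ≤ lam) (h2 : lam ≤ 2 ^ κ) :
    ExistsNonHomeoFamily (2 ^ lam) (fun X t =>
      letI := t
      PathConnectedSpace X ∧ LocPathConnectedSpace X ∧ AlmostMetrizable X ∧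
        #X = κ ∧ tweight X = lam) := by
  let O := κ.ord.ToType
  have hO : #O = κ := mk_ord_toType κ
  have hκ : ℵ₀ ≤ κ := aleph0_le_continuum.trans h0
  have : Infinite O := infinite_iff.2 (hκ.trans_eq hO.symm)
  let : TopologicalSpace O := ⊥
  have : DiscreteTopology O := ⟨rfl⟩
  obtain ⟨d, hd⟩ : ∃ d : O → lam.out → Bool, DenseRange d :=
    exists_denseRange_pi_bool (by rwa [mk_out, hO])
  obtain ⟨ℓ⟩ : Nonempty (O × ℕ ≃ O) := Cardinal.eq.1 (by simp [hO, hκ])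
  have hY : #(TreeSum ℓ) = κ := (TreeSum.mk_treeSum ℓ (h0.trans_eq hO.symm)).trans hO
  have hfamily := existsNonHomeoFamily_pointExtension (Y := TreeSum ℓ) TreeSum.continuous_height
    TreeSum.continuous_fst TreeSum.hasEscapingRays_height TreeSum.exists_fst_eq_height_nonpos
    (TreeSum.fst_comp_homeomorph ℓ.injective) hd (hκ.trans_eq hY.symm) (by rwa [hY, mk_out])
    (by rw [mk_out]; exact h0.trans h1)
  rwa [mk_out, hY] at hfamily
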